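/- The homology of the chain complex of abelian groups (C(j)_*)^{D_{2p}} of D_{2p}-invariants of the dihedral cellular complex satisfies: H_n ≅ A_n ⊕ P_n ⊕ Q_n, where A_n = ℤ if n = 0 and 0 otherwise; P_n = ℤ/p if 0 < n < 2m−1 and n ≡ 3 (mod 4), and 0 otherwise; and Q_n = ℤ if n = 2m−1 and m is even, Q_n = ℤ/2 if m−1 ≤ n < 2m−1 and n ≡ m−1 (mod 2), and Q_n = 0 otherwise. (This is the value at the orbit D_{2p}/D_{2p} of the Bredon homology H^{D_{2p}}_*(S(mγ); constant ℤ) = ℤ ⊕ ₀A_m ⊕ B_m[m−1].) -/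

import Mathlib

open DihedralGroup Finsupp

noncomputable section

namespace DihedralCell

variable (p : ℕ)

/-- ζ, the rotation of order `p`. -/
def zeta : DihedralGroup p := .r 1

/-- τ, the reflection. -/
def tau : DihedralGroup p := .sr 0

/-- The order-2 subgroup ⟨τ⟩. -/
def Htau : Subgroup (DihedralGroup p) := Subgroup.zpowers (tau p)

/-- Left cosets of ⟨τ⟩. -/
abbrev Cos := DihedralGroup p ⧸ Htau p

/-- Cell names of the dihedral cellular structure on `S(mγ_j)`: `a0 k q`/`b0 k q` are the
cells `q·a_{k,0}`, `q·b_{k,0}` (indexed by cosets of ⟨τ⟩); `a k l g`, `b k l g` (`1 ≤ l ≤ k-1`)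
are the free cells `g·a_{k,l}`, `g·b_{k,l}`; `c k g` is `g·c_k`. -/
inductive CIdx : Type
  | a0 (k : ℕ) (q : Cos p)
  | b0 (k : ℕ) (q : Cos p)
  | a (k l : ℕ) (g : DihedralGroup p)
  | b (k l : ℕ) (g : DihedralGroup p)
  | c (k : ℕ) (g : DihedralGroup p)

variable {p}

/-- The dimension of a cell. -/
def degC : CIdx p → ℕ
  | .a0 k _ => k - 1
  | .b0 k _ => k - 1
  | .a k l _ => k + l - 1
  | .b k l _ => k + l - 1
  | .c k _ => 2 * k - 1

/-- Validity of a cell index (the junk-free cells), for the sphere `S(mγ)`. -/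
def validC (m : ℕ) : CIdx p → Prop
  | .a0 k _ => 1 ≤ k ∧ k ≤ m
  | .b0 k _ => 1 ≤ k ∧ k ≤ m
  | .a k l _ => 1 ≤ l ∧ l ≤ k - 1 ∧ k ≤ m
  | .b k l _ => 1 ≤ l ∧ l ≤ k - 1 ∧ k ≤ m
  | .c k _ => 1 ≤ k ∧ k ≤ m

/-- The action of the dihedral group on cells. -/
def actC (g' : DihedralGroup p) : CIdx p → CIdx p
  | .a0 k q => .a0 k (g' • q)
  | .b0 k q => .b0 k (g' • q)
  | .a k l g => .a k l (g' * g)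
  | .b k l g => .b k l (g' * g)
  | .c k g => .c k (g' * g)

variable (p)

/-- The total module of cellular chains (all degrees together). -/
abbrev ChC := CIdx p →₀ ℤ

/-- The `ℤ`-linear action of `D_{2p}` on chains. -/
def rhoC (g : DihedralGroup p) : ChC p →ₗ[ℤ] ChC p :=
  Finsupp.lmapDomain ℤ ℤ (actC g)

/-- The submodule of chains of degree `n` (the degree-`n` term of the complex `C(j)`). -/
def Csub (m n : ℕ) : Submodule ℤ (ChC p) :=
  Finsupp.supported ℤ ℤ {i | validC m i ∧ degC i = n}

/-- The boundary of a single cell, following Lemma 2.2 of the paper (for the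
representation `γ_j`, i.e. with `ζ_i = ζ^j`). -/
def bndC (j : ℕ) : CIdx p → ChC p
  | .a0 k q => if k ≤ 1 then 0 else single (.a0 (k-1) q) 1 - single (.b0 (k-1) q) 1
  | .b0 k q => if k ≤ 1 then 0 else single (.a0 (k-1) q) 1 - single (.b0 (k-1) q) 1
  | .c k g =>
      if k ≤ 1 then
        (single (.b0 1 (↑(g * zeta p ^ (j * ((p+1)/2))))) 1 : ChC p) - single (.a0 1 ↑g) 1
      else
        single (.a k (k-1) g) (-1) + single (.a k (k-1) (g * tau p)) ((-1)^k)
        + single (.b k (k-1) (g * zeta p ^ (j * ((p+1)/2)))) 1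
        + single (.b k (k-1) (g * zeta p ^ (j * ((p+1)/2)) * tau p)) ((-1)^(k-1))
  | .a k l g =>
      if l = 0 then 0
      else if l = k - 1 then
        (if k = 2 then (single (.a0 k (↑g : Cos p)) (-1) : ChC p)
         else single (.a k (k-2) g) (-1) + single (.a k (k-2) (g * tau p)) ((-1)^(k-1)))
        + single (.c (k-1) g) (-1)
        - ∑ t ∈ Finset.range ((p-1)/2), single (.c (k-1) (g * zeta p ^ (j * (t+1)))) 1
        + ∑ t ∈ Finset.range ((p-1)/2),
            single (.c (k-1) (g * zeta p ^ (j * (t+1)) * tau p)) ((-1)^(k-2))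
      else if l = 1 then
        single (.a (k-1) 1 g) 1 - single (.b (k-1) 1 g) 1 + single (.a0 k (↑g : Cos p)) ((-1)^(k-1))
      else
        single (.a (k-1) l g) 1 - single (.b (k-1) l g) 1
        + single (.a k (l-1) g) ((-1)^(k-l)) + single (.a k (l-1) (g * tau p)) ((-1)^(k-1))
  | .b k l g =>
      if l = 0 then 0
      else if l = k - 1 then
        (if k = 2 then (single (.b0 k (↑g : Cos p)) (-1) : ChC p)
         else single (.b k (k-2) g) (-1) + single (.b k (k-2) (g * tau p)) ((-1)^(k-1)))
        + single (.c (k-1) g) (-1)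
        - ∑ t ∈ Finset.range ((p-1)/2), single (.c (k-1) (g * zeta p ^ (j * (t+1)))) 1
        + ∑ t ∈ Finset.range ((p-1)/2),
            single (.c (k-1) (g * zeta p ^ (j * (t+1)) * tau p)) ((-1)^(k-2))
      else if l = 1 then
        single (.a (k-1) 1 g) 1 - single (.b (k-1) 1 g) 1 + single (.b0 k (↑g : Cos p)) ((-1)^(k-1))
      else
        single (.a (k-1) l g) 1 - single (.b (k-1) l g) 1
        + single (.b k (l-1) g) ((-1)^(k-l)) + single (.b k (l-1) (g * tau p)) ((-1)^(k-1))

/-- The differential of the dihedral cellular complex `C(j)`. -/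
def DC (j : ℕ) : ChC p →ₗ[ℤ] ChC p :=
  Finsupp.lift (ChC p) ℤ (CIdx p) (bndC p j)

/-- The submodule of `D_{2p}`-invariant chains of degree `n`. -/
def InvC (m n : ℕ) : Submodule ℤ (ChC p) :=
  Csub p m n ⊓ (⨅ g : DihedralGroup p, LinearMap.ker (rhoC p g - LinearMap.id))

/-- Cycles of degree `n` of the underlying complex of abelian groups. -/
def ZcC (m j n : ℕ) : Submodule ℤ (ChC p) := Csub p m n ⊓ LinearMap.ker (DC p j)

/-- Degree-`n` homology of the underlying complex of abelian groups of `C(j)`. -/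
def HcC (m j n : ℕ) : Type :=
  ↥(ZcC p m j n) ⧸ Submodule.comap (ZcC p m j n).subtype
    (Submodule.map (DC p j) (Csub p m (n+1)))

instance (m j n : ℕ) : AddCommGroup (HcC p m j n) :=
  inferInstanceAs (AddCommGroup (↥(ZcC p m j n) ⧸ Submodule.comap (ZcC p m j n).subtype
    (Submodule.map (DC p j) (Csub p m (n+1)))))

instance (m j n : ℕ) : Module ℤ (HcC p m j n) :=
  inferInstanceAs (Module ℤ (↥(ZcC p m j n) ⧸ Submodule.comap (ZcC p m j n).subtype
    (Submodule.map (DC p j) (Csub p m (n+1)))))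

/-- Cycles of degree `n` of the complex of `D_{2p}`-invariants `(C(j))^{D_{2p}}`. -/
def ZinvC (m j n : ℕ) : Submodule ℤ (ChC p) := InvC p m n ⊓ LinearMap.ker (DC p j)

/-- Degree-`n` homology of the complex of `D_{2p}`-invariants of `C(j)`. -/
def HinvC (m j n : ℕ) : Type :=
  ↥(ZinvC p m j n) ⧸ Submodule.comap (ZinvC p m j n).subtype
    (Submodule.map (DC p j) (InvC p m (n+1)))

instance (m j n : ℕ) : AddCommGroup (HinvC p m j n) :=
  inferInstanceAs (AddCommGroup (↥(ZinvC p m j n) ⧸ Submodule.comap (ZinvC p m j n).subtype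
    (Submodule.map (DC p j) (InvC p m (n+1)))))

instance (m j n : ℕ) : Module ℤ (HinvC p m j n) :=
  inferInstanceAs (Module ℤ (↥(ZinvC p m j n) ⧸ Submodule.comap (ZinvC p m j n).subtype
    (Submodule.map (DC p j) (InvC p m (n+1)))))

/-- The dual module: `ℤ`-linear functionals on chains. -/
abbrev DualC := ChC p →ₗ[ℤ] ℤ

/-- Degree-`n` cochains of `Hom_{ℤ[D_{2p}]}(C(j), ℤ)`: `D_{2p}`-equivariant functionals
(`ℤ` with the trivial action) supported on the degree-`n` cells. -/
def KcoC (m n : ℕ) : Submodule ℤ (DualC p) :=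
  (⨅ i : {i : CIdx p // ¬(validC m i ∧ degC i = n)},
      LinearMap.ker (LinearMap.applyₗ (single i.1 1)))
  ⊓ (⨅ g : DihedralGroup p, LinearMap.ker (LinearMap.lcomp ℤ ℤ (rhoC p g) - LinearMap.id))

open Classical in
/-- Projection of the total chain module onto its degree-`n` summand. -/
def projC (m n : ℕ) : ChC p →ₗ[ℤ] ChC p :=
  Finsupp.lift (ChC p) ℤ (CIdx p)
    (fun i => if validC m i ∧ degC i = n then single i 1 else 0)

/-- The coboundary taking a degree-`n` cochain `f` to the degree-`(n+1)` cochain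
`f ∘ d` (precomposition with the differential out of degree `n+1`). -/
def cobdC (m j n : ℕ) : DualC p →ₗ[ℤ] DualC p :=
  LinearMap.lcomp ℤ ℤ ((DC p j).comp (projC p m (n+1)))

/-- Degree-`n` cocycles of `Hom_{ℤ[D_{2p}]}(C(j), ℤ)`. -/
def ZcoC (m j n : ℕ) : Submodule ℤ (DualC p) := KcoC p m n ⊓ LinearMap.ker (cobdC p m j n)

/-- Degree-`n` cohomology of the cochain complex `Hom_{ℤ[D_{2p}]}(C(j), ℤ)`. -/
def HcoC (m j n : ℕ) : Type :=
  ↥(ZcoC p m j n) ⧸ Submodule.comap (ZcoC p m j n).subtype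
    (Submodule.map (cobdC p m j (n-1)) (KcoC p m (n-1)))

instance (m j n : ℕ) : AddCommGroup (HcoC p m j n) :=
  inferInstanceAs (AddCommGroup (↥(ZcoC p m j n) ⧸ Submodule.comap (ZcoC p m j n).subtype
    (Submodule.map (cobdC p m j (n-1)) (KcoC p m (n-1)))))

instance (m j n : ℕ) : Module ℤ (HcoC p m j n) :=
  inferInstanceAs (Module ℤ (↥(ZcoC p m j n) ⧸ Submodule.comap (ZcoC p m j n).subtype
    (Submodule.map (cobdC p m j (n-1)) (KcoC p m (n-1)))))


set_option linter.unusedSectionVars false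

section Aux

open Classical in
lemma mem_InvC {p : ℕ} {m n : ℕ} {x : ChC p} : x ∈ InvC p m n ↔
    (∀ i, x i ≠ 0 → validC m i ∧ degC i = n) ∧ ∀ g i, x (actC g i) = x i := by
  have hinv : ∀ (g : DihedralGroup p) (i : CIdx p), actC g (actC g⁻¹ i) = i := by
    intro g i; cases i <;> simp [actC]
  have hinj : ∀ g : DihedralGroup p, Function.Injective (actC g) := by
    intro g a b h
    have h2 := congrArg (actC g⁻¹) h
    have h3 := hinv g⁻¹ a
    have h4 := hinv g⁻¹ b
    rw [inv_inv] at h3 h4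
    rw [h3, h4] at h2
    exact h2
  unfold InvC Csub
  rw [Submodule.mem_inf, Finsupp.mem_supported, Submodule.mem_iInf]
  constructor
  · rintro ⟨h1, h2⟩
    refine ⟨fun i hi => h1 (by simpa using hi), fun g i => ?_⟩
    have := h2 g
    rw [LinearMap.mem_ker, LinearMap.sub_apply, sub_eq_zero] at this
    simp only [rhoC, Finsupp.lmapDomain_apply, LinearMap.id_apply] at this
    conv_lhs => rw [← this]
    exact Finsupp.mapDomain_apply (hinj g) x i
  · rintro ⟨h1, h2⟩
    refine ⟨fun i hi => h1 i (by simpa using hi), fun g => ?_⟩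
    rw [LinearMap.mem_ker, LinearMap.sub_apply, sub_eq_zero]
    simp only [rhoC, Finsupp.lmapDomain_apply, LinearMap.id_apply]
    ext i
    conv_lhs => rw [← hinv g i]
    rw [Finsupp.mapDomain_apply (hinj g)]
    rw [← h2 g, hinv]

variable [NeZero p]

noncomputable local instance fintypeCos : Fintype (Cos p) := Fintype.ofFinite _

/-- Orbit sum of `a_{k,l}`. -/
def gA (k : ℕ) : ℕ → ChC p
  | 0 => ∑ q : Cos p, single (.a0 k q) 1
  | l + 1 => ∑ g : DihedralGroup p, single (.a k (l + 1) g) 1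

/-- Orbit sum of `b_{k,l}`. -/
def gB (k : ℕ) : ℕ → ChC p
  | 0 => ∑ q : Cos p, single (.b0 k q) 1
  | l + 1 => ∑ g : DihedralGroup p, single (.b k (l + 1) g) 1

/-- Orbit sum of `c_k`. -/
def gC (k : ℕ) : ChC p := ∑ g : DihedralGroup p, single (.c k g) 1

def gX (k l : ℕ) : ChC p := gA p k l - gB p k l

def eps (k l : ℕ) : ℤ := if Odd l then 2 * (-1) ^ (k + 1) else 0

def uu (k : ℕ) : ℤ := if Odd k then 1 else p

variable {p}

lemma sum_mulR (f : DihedralGroup p → CIdx p) (h : DihedralGroup p) (c : ℤ) :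
    ∑ g, (single (f (g * h)) c : ChC p) = c • ∑ g, single (f g) 1 := by
  rw [Finset.smul_sum]
  simp only [Finsupp.smul_single, smul_eq_mul, mul_one]
  exact Fintype.sum_equiv (Equiv.mulRight h) _ _ (fun g => rfl)

lemma sum_id (f : DihedralGroup p → CIdx p) (c : ℤ) :
    ∑ g, (single (f g) c : ChC p) = c • ∑ g, single (f g) 1 := by
  rw [Finset.smul_sum]
  simp only [Finsupp.smul_single, smul_eq_mul, mul_one]

open Classical in
lemma sum_cos {M : Type*} [AddCommGroup M] (f : Cos p → M) :
    ∑ g : DihedralGroup p, f ↑g = (2 : ℤ) • ∑ q, f q := by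
  have hfib : ∀ q : Cos p, (Finset.univ.filter (fun g : DihedralGroup p => (g : Cos p) = q)).card = 2 := by
    intro q
    obtain ⟨h, rfl⟩ := QuotientGroup.mk_surjective q
    have : (Finset.univ.filter (fun g : DihedralGroup p => (g : Cos p) = (h : Cos p)))
        = {h, h * tau p} := by
      ext g
      simp only [Finset.mem_filter, Finset.mem_univ, true_and, Finset.mem_insert,
        Finset.mem_singleton]
      rw [eq_comm, QuotientGroup.eq]
      have ht : tau p ^ 2 = 1 := by simp [tau, pow_two]
      constructor
      · intro hh
        obtain ⟨z, hz⟩ := Subgroup.mem_zpowers_iff.mp hh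
        rcases Int.even_or_odd' z with ⟨c, rfl | rfl⟩
        · left
          rw [zpow_mul] at hz
          norm_cast at hz
          rw [ht, one_zpow] at hz
          exact (inv_mul_eq_one.mp hz.symm).symm
        · right
          rw [zpow_add, zpow_mul] at hz
          norm_cast at hz
          rw [ht, one_zpow, one_mul, pow_one] at hz
          rw [hz]; group
      · rintro (rfl | rfl)
        · simp
        · simp only [inv_mul_cancel_left]
          exact Subgroup.mem_zpowers _
    rw [this, Finset.card_pair]
    intro hh
    have : tau p = 1 := by simpa using hh.symm
    rw [tau, DihedralGroup.one_def] at this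
    cases this
  rw [← Finset.sum_fiberwise (Finset.univ) (fun g : DihedralGroup p => (g : Cos p))]
  rw [Finset.smul_sum]
  refine Finset.sum_congr rfl fun q _ => ?_
  rw [Finset.sum_congr rfl (g := fun _ => f q), Finset.sum_const, hfib]
  · rw [← natCast_zsmul]; rfl
  · intro g hg
    rw [(Finset.mem_filter.mp hg).2]

lemma sum_cosA (f : Cos p → CIdx p) (c : ℤ) :
    ∑ g : DihedralGroup p, (single (f ↑g) c : ChC p) = (2 * c) • ∑ q, single (f q) 1 := by
  rw [sum_cos (fun q => (single (f q) c : ChC p)), mul_smul, Finset.smul_sum (r := c)]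
  simp only [Finsupp.smul_single, smul_eq_mul, mul_one]

lemma sum_cosR (f : Cos p → CIdx p) (h : DihedralGroup p) (c : ℤ) :
    ∑ g : DihedralGroup p, (single (f ↑(g * h)) c : ChC p) = (2 * c) • ∑ q, single (f q) 1 := by
  rw [← sum_cosA]
  exact Fintype.sum_equiv (Equiv.mulRight h) _ _ (fun g => rfl)


lemma DC_single (j : ℕ) (i : CIdx p) : DC p j (single i 1) = bndC p j i := by
  simp [DC]

variable (j : ℕ)

lemma D_A0 (k : ℕ) : DC p j (gA p (k + 2) 0) = gX p (k + 1) 0 := by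
  simp only [gA, gX, gB, map_sum, DC_single, bndC]
  simp [Finset.sum_sub_distrib]

lemma D_B0 (k : ℕ) : DC p j (gB p (k + 2) 0) = gX p (k + 1) 0 := by
  simp only [gA, gX, gB, map_sum, DC_single, bndC]
  simp [Finset.sum_sub_distrib]

lemma D_A10 : DC p j (gA p 1 0) = 0 := by
  simp [gA, map_sum, DC_single, bndC]

lemma D_B10 : DC p j (gB p 1 0) = 0 := by
  simp [gB, map_sum, DC_single, bndC]

/-- The `c`-part of the boundary. -/
def cpart (k e : ℕ) (g : DihedralGroup p) : ChC p :=
  (single (.c k g) (-1) : ChC p)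
    - ∑ t ∈ Finset.range ((p-1)/2), single (.c k (g * zeta p ^ (j * (t+1)))) 1
    + ∑ t ∈ Finset.range ((p-1)/2),
        single (.c k (g * zeta p ^ (j * (t+1)) * tau p)) ((-1)^e)

lemma bnd_c (k : ℕ) (g : DihedralGroup p) : bndC p j (.c (k + 1 + 1) g) =
    single (.a (k + 1 + 1) (k + 1) g) (-1) + single (.a (k + 1 + 1) (k + 1) (g * tau p)) ((-1)^(k + 1 + 1))
        + single (.b (k + 1 + 1) (k + 1) (g * zeta p ^ (j * ((p+1)/2)))) 1
        + single (.b (k + 1 + 1) (k + 1) (g * zeta p ^ (j * ((p+1)/2)) * tau p)) ((-1)^(k + 1)) := by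
  simp [bndC]

lemma bnd_atop1 (g : DihedralGroup p) : bndC p j (.a 2 1 g) =
    single (.a0 2 (g : Cos p)) (-1) + cpart j 1 0 g := by
  simp only [bndC, cpart]
  norm_num
  abel

lemma bnd_atop (l : ℕ) (g : DihedralGroup p) : bndC p j (.a (l + 3) (l + 2) g) =
    single (.a (l + 3) (l + 1) g) (-1) + single (.a (l + 3) (l + 1) (g * tau p)) ((-1)^(l + 2))
      + cpart j (l + 2) (l + 1) g := by
  have h1 : l + 3 - 2 = l + 1 := by omega
  have h2 : l + 3 - 1 = l + 2 := by omega
  have h3 : ¬ (l + 3 = 2) := by omega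
  have h4 : ¬ (l + 2 = 0) := by omega
  simp only [bndC, cpart, h1, h2, if_neg h3, if_neg h4, if_true]
  simp only [sub_eq_add_neg, add_assoc]

lemma bnd_amid1 (d : ℕ) (g : DihedralGroup p) : bndC p j (.a (d + 3) 1 g) =
    single (.a (d + 2) 1 g) 1 - single (.b (d + 2) 1 g) 1
      + single (.a0 (d + 3) (g : Cos p)) ((-1)^(d + 2)) := by
  simp only [bndC]
  norm_num

lemma bnd_amid (l d : ℕ) (g : DihedralGroup p) : bndC p j (.a (l + d + 4) (l + 2) g) =
    single (.a (l + d + 3) (l + 2) g) 1 - single (.b (l + d + 3) (l + 2) g) 1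
      + single (.a (l + d + 4) (l + 1) g) ((-1)^(d + 2))
      + single (.a (l + d + 4) (l + 1) (g * tau p)) ((-1)^(l + d + 3)) := by
  have h1 : l + d + 4 - (l + 2) = d + 2 := by omega
  have h2 : l + d + 4 - 1 = l + d + 3 := by omega
  have h3 : ¬ (l + 2 = l + d + 3) := by omega
  simp only [bndC, h1, h2, if_neg h3]
  norm_num
  intro h; omega

lemma bnd_btop1 (g : DihedralGroup p) : bndC p j (.b 2 1 g) =
    single (.b0 2 (g : Cos p)) (-1) + cpart j 1 0 g := by
  simp only [bndC, cpart]
  norm_num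
  abel

lemma bnd_btop (l : ℕ) (g : DihedralGroup p) : bndC p j (.b (l + 3) (l + 2) g) =
    single (.b (l + 3) (l + 1) g) (-1) + single (.b (l + 3) (l + 1) (g * tau p)) ((-1)^(l + 2))
      + cpart j (l + 2) (l + 1) g := by
  have h1 : l + 3 - 2 = l + 1 := by omega
  have h2 : l + 3 - 1 = l + 2 := by omega
  have h3 : ¬ (l + 3 = 2) := by omega
  have h4 : ¬ (l + 2 = 0) := by omega
  simp only [bndC, cpart, h1, h2, if_neg h3, if_neg h4, if_true]
  simp only [sub_eq_add_neg, add_assoc]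

lemma bnd_bmid1 (d : ℕ) (g : DihedralGroup p) : bndC p j (.b (d + 3) 1 g) =
    single (.a (d + 2) 1 g) 1 - single (.b (d + 2) 1 g) 1
      + single (.b0 (d + 3) (g : Cos p)) ((-1)^(d + 2)) := by
  simp only [bndC]
  norm_num

lemma bnd_bmid (l d : ℕ) (g : DihedralGroup p) : bndC p j (.b (l + d + 4) (l + 2) g) =
    single (.a (l + d + 3) (l + 2) g) 1 - single (.b (l + d + 3) (l + 2) g) 1
      + single (.b (l + d + 4) (l + 1) g) ((-1)^(d + 2))
      + single (.b (l + d + 4) (l + 1) (g * tau p)) ((-1)^(l + d + 3)) := by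
  have h1 : l + d + 4 - (l + 2) = d + 2 := by omega
  have h2 : l + d + 4 - 1 = l + d + 3 := by omega
  have h3 : ¬ (l + 2 = l + d + 3) := by omega
  simp only [bndC, h1, h2, if_neg h3]
  norm_num
  intro h; omega

lemma D_C (k : ℕ) : DC p j (gC p (k + 1)) = (if Odd (k + 1) then (-2 : ℤ) else 0) • gX p (k + 1) k := by
  rcases k with _ | k
  · simp only [gC, map_sum, DC_single, bndC, gX, gA, gB]
    simp only [zero_add, le_refl, if_true, Finset.sum_sub_distrib]
    rw [sum_cosR (fun q => .b0 1 q), sum_cosA (fun q => .a0 1 q)]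
    simp only [odd_one, if_true]
    module
  · simp only [gC, map_sum, DC_single, bnd_c, gX, gA, gB]
    simp only [Finset.sum_add_distrib, mul_assoc]
    rw [sum_id (fun g => .a (k + 1 + 1) (k + 1) g), sum_mulR (fun g => .a (k + 1 + 1) (k + 1) g),
      sum_mulR (fun g => .b (k + 1 + 1) (k + 1) g), sum_mulR (fun g => .b (k + 1 + 1) (k + 1) g)]
    rcases Nat.even_or_odd k with h | h
    · have h1 : ¬ Odd (k + 1 + 1) := by simp [parity_simps, h]
      rw [if_neg h1]
      simp only [pow_succ, h.neg_one_pow]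
      module
    · have h1 : Odd (k + 1 + 1) := by simp [parity_simps, h]
      rw [if_pos h1]
      simp only [pow_succ, h.neg_one_pow]
      module

lemma sum_c (hodd : Odd p) (k e : ℕ) :
    ∑ g : DihedralGroup p, cpart j k e g
      = (if Even e then (-1 : ℤ) else -p) • gC p k := by
  simp only [cpart]
  rw [Finset.sum_add_distrib, Finset.sum_sub_distrib, Finset.sum_comm]
  rw [Finset.sum_comm (f := fun g t => (single (CIdx.c k (g * zeta p ^ (j * (t+1)) * tau p)) ((-1)^e) : ChC p))]
  simp only [mul_assoc]
  simp only [sum_mulR (fun g => .c k g), sum_id (fun g => .c k g) (-1)]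
  simp only [Finset.sum_const, Finset.card_range]
  obtain ⟨q, hq⟩ := hodd
  have : (p - 1) / 2 = q := by omega
  rw [this]
  have hp : (p : ℤ) = 2 * q + 1 := by exact_mod_cast hq
  rw [← natCast_zsmul, ← natCast_zsmul, hp]
  simp only [gC]
  rcases Nat.even_or_odd e with h | h
  · rw [if_pos h, h.neg_one_pow]; module
  · rw [if_neg (by simpa using h), h.neg_one_pow]; module

lemma D_Atop (hodd : Odd p) (l : ℕ) : DC p j (gA p (l + 2) (l + 1)) =
    eps (l + 2) (l + 1) • gA p (l + 2) l - uu p (l + 1) • gC p (l + 1) := by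
  rcases l with _ | l
  · simp only [gA, map_sum, DC_single, zero_add, bnd_atop1, Finset.sum_add_distrib, sum_c j hodd]
    rw [sum_cosA (fun q => .a0 2 q)]
    simp only [eps, uu, odd_one, if_true, Even.zero]
    module
  · simp only [gA, map_sum, DC_single, add_assoc, Nat.reduceAdd, bnd_atop, Finset.sum_add_distrib, sum_c j hodd]
    rw [sum_id (fun g => .a (l + 3) (l + 1) g), sum_mulR (fun g => .a (l + 3) (l + 1) g)]
    rcases Nat.even_or_odd l with h | h
    · have h1 : ¬ Odd (l + 2) := by simp [parity_simps, h]
      have h2 : ¬ Even (l + 1) := by simp [parity_simps, h]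
      simp only [eps, uu, if_neg h1, if_neg h2, pow_succ, h.neg_one_pow]
      module
    · have h1 : Odd (l + 2) := by simp [parity_simps, h]
      have h2 : Even (l + 1) := by simp [parity_simps, h]
      simp only [eps, uu, if_pos h1, if_pos h2, pow_succ, h.neg_one_pow]
      module

lemma D_Amid (l d : ℕ) : DC p j (gA p (l + d + 3) (l + 1)) =
    gX p (l + d + 2) (l + 1) + eps (l + d + 3) (l + 1) • gA p (l + d + 3) l := by
  rcases l with _ | l
  · simp only [gX, gA, gB, map_sum, DC_single, zero_add, bnd_amid1, Finset.sum_add_distrib,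
      Finset.sum_sub_distrib]
    rw [sum_cosA (fun q => .a0 (d + 3) q)]
    simp only [eps, odd_one, if_true, pow_succ]
    module
  · have e1 : l + 1 + d + 3 = l + d + 4 := by omega
    have e2 : l + 1 + d + 2 = l + d + 3 := by omega
    rw [e1, e2]
    simp only [gX, gA, gB, map_sum, DC_single, add_assoc l 1 1, Nat.reduceAdd, bnd_amid, Finset.sum_add_distrib,
      Finset.sum_sub_distrib]
    rw [sum_id (fun g => .a (l + d + 4) (l + 1) g), sum_mulR (fun g => .a (l + d + 4) (l + 1) g)]
    rcases Nat.even_or_odd l with h | h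
    · have h1 : ¬ Odd (l + 2) := by simp [parity_simps, h]
      simp only [eps, if_neg h1, pow_succ, pow_add, h.neg_one_pow]
      module
    · have h1 : Odd (l + 2) := by simp [parity_simps, h]
      simp only [eps, if_pos h1, pow_succ, pow_add, h.neg_one_pow]
      module

lemma D_Btop (hodd : Odd p) (l : ℕ) : DC p j (gB p (l + 2) (l + 1)) =
    eps (l + 2) (l + 1) • gB p (l + 2) l - uu p (l + 1) • gC p (l + 1) := by
  rcases l with _ | l
  · simp only [gB, map_sum, DC_single, zero_add, bnd_btop1, Finset.sum_add_distrib, sum_c j hodd]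
    rw [sum_cosA (fun q => .b0 2 q)]
    simp only [eps, uu, odd_one, if_true, Even.zero]
    module
  · simp only [gB, map_sum, DC_single, add_assoc, Nat.reduceAdd, bnd_btop, Finset.sum_add_distrib, sum_c j hodd]
    rw [sum_id (fun g => .b (l + 3) (l + 1) g), sum_mulR (fun g => .b (l + 3) (l + 1) g)]
    rcases Nat.even_or_odd l with h | h
    · have h1 : ¬ Odd (l + 2) := by simp [parity_simps, h]
      have h2 : ¬ Even (l + 1) := by simp [parity_simps, h]
      simp only [eps, uu, if_neg h1, if_neg h2, pow_succ, h.neg_one_pow]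
      module
    · have h1 : Odd (l + 2) := by simp [parity_simps, h]
      have h2 : Even (l + 1) := by simp [parity_simps, h]
      simp only [eps, uu, if_pos h1, if_pos h2, pow_succ, h.neg_one_pow]
      module

lemma D_Bmid (l d : ℕ) : DC p j (gB p (l + d + 3) (l + 1)) =
    gX p (l + d + 2) (l + 1) + eps (l + d + 3) (l + 1) • gB p (l + d + 3) l := by
  rcases l with _ | l
  · simp only [gX, gA, gB, map_sum, DC_single, zero_add, bnd_bmid1, Finset.sum_add_distrib,
      Finset.sum_sub_distrib]
    rw [sum_cosA (fun q => .b0 (d + 3) q)]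
    simp only [eps, odd_one, if_true, pow_succ]
    module
  · have e1 : l + 1 + d + 3 = l + d + 4 := by omega
    have e2 : l + 1 + d + 2 = l + d + 3 := by omega
    rw [e1, e2]
    simp only [gX, gA, gB, map_sum, DC_single, add_assoc l 1 1, Nat.reduceAdd, bnd_bmid, Finset.sum_add_distrib,
      Finset.sum_sub_distrib]
    rw [sum_id (fun g => .b (l + d + 4) (l + 1) g), sum_mulR (fun g => .b (l + d + 4) (l + 1) g)]
    rcases Nat.even_or_odd l with h | h
    · have h1 : ¬ Odd (l + 2) := by simp [parity_simps, h]
      simp only [eps, if_neg h1, pow_succ, pow_add, h.neg_one_pow]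
      module
    · have h1 : Odd (l + 2) := by simp [parity_simps, h]
      simp only [eps, if_pos h1, pow_succ, pow_add, h.neg_one_pow]
      module

lemma D_X0 (k : ℕ) : DC p j (gX p (k + 1) 0) = 0 := by
  rw [gX, map_sub]
  rcases k with _ | k
  · rw [zero_add, D_A10, D_B10, sub_zero]
  · rw [D_A0, D_B0, sub_self]

lemma D_X (hodd : Odd p) (k l : ℕ) (h : l + 1 < k) : DC p j (gX p k (l + 1)) = eps k (l + 1) • gX p k l := by
  rw [gX, map_sub]
  obtain ⟨d, rfl⟩ := Nat.exists_eq_add_of_lt h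
  rcases d with _ | d
  · have e1 : l + 1 + 0 + 1 = l + 2 := by omega
    rw [e1, D_Atop j hodd, D_Btop j hodd, gX]; module
  · have e1 : l + 1 + (d + 1) + 1 = l + d + 3 := by omega
    rw [e1, D_Amid, D_Bmid]; simp only [gX]; module


/-- Representative of the orbit `a_{k,l}`. -/
def rA (p k : ℕ) : ℕ → CIdx p
  | 0 => .a0 k ((1 : DihedralGroup p) : Cos p)
  | l + 1 => .a k (l + 1) 1

/-- Representative of the orbit `b_{k,l}`. -/
def rB (p k : ℕ) : ℕ → CIdx p
  | 0 => .b0 k ((1 : DihedralGroup p) : Cos p)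
  | l + 1 => .b k (l + 1) 1

def sF (p k l : ℕ) : ChC p →ₗ[ℤ] ℤ := Finsupp.lapply (rA p k l) + Finsupp.lapply (rB p k l)

def bF (p k l : ℕ) : ChC p →ₗ[ℤ] ℤ := - Finsupp.lapply (rB p k l)

def cF (p k : ℕ) : ChC p →ₗ[ℤ] ℤ := Finsupp.lapply (.c k 1)

section
open Classical

lemma gA_rA (k l k' l' : ℕ) : gA p k' l' (rA p k l) = if k = k' ∧ l = l' then 1 else 0 := by
  cases l <;> cases l' <;>
    simp [gA, rA, Finsupp.single_apply, ite_and, eq_comm]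

lemma gA_rB (k l k' l' : ℕ) : gA p k' l' (rB p k l) = 0 := by
  cases l <;> cases l' <;> simp [gA, rB]

lemma gB_rA (k l k' l' : ℕ) : gB p k' l' (rA p k l) = 0 := by
  cases l <;> cases l' <;> simp [gB, rA]

lemma gB_rB (k l k' l' : ℕ) : gB p k' l' (rB p k l) = if k = k' ∧ l = l' then 1 else 0 := by
  cases l <;> cases l' <;>
    simp [gB, rB, Finsupp.single_apply, ite_and, eq_comm]

lemma sF_gA (k l k' l' : ℕ) : sF p k l (gA p k' l') = if k = k' ∧ l = l' then 1 else 0 := by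
  simp [sF, gA_rA, gA_rB]

lemma bF_gA (k l k' l' : ℕ) : bF p k l (gA p k' l') = 0 := by
  simp [bF, gA_rB]

lemma cF_gA (k k' l' : ℕ) : cF p k (gA p k' l') = 0 := by
  cases l' <;> simp [cF, gA]

lemma sF_gX (k l k' l' : ℕ) : sF p k l (gX p k' l') = 0 := by
  simp [sF, gX, gA_rA, gA_rB, gB_rA, gB_rB]

lemma bF_gX (k l k' l' : ℕ) : bF p k l (gX p k' l') = if k = k' ∧ l = l' then 1 else 0 := by
  simp [bF, gX, gA_rB, gB_rB]

lemma cF_gX (k k' l' : ℕ) : cF p k (gX p k' l') = 0 := by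
  cases l' <;> simp [cF, gX, gA, gB]

lemma sF_gC (k l k' : ℕ) : sF p k l (gC p k') = 0 := by
  cases l <;> simp [sF, rA, rB, gC]

lemma bF_gC (k l k' : ℕ) : bF p k l (gC p k') = 0 := by
  cases l <;> simp [bF, rB, gC]

lemma cF_gC (k k' : ℕ) : cF p k (gC p k') = if k = k' then 1 else 0 := by
  simp [cF, gC, Finsupp.single_apply, ite_and, eq_comm]

lemma gA_mem {m n k l : ℕ} (h1 : l < k) (h2 : k ≤ m) (h3 : k + l = n + 1) : gA p k l ∈ InvC p m n := by
  rw [mem_InvC]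
  constructor
  · intro i hi
    rcases l with _ | l <;> rcases i with ⟨k', q⟩ | ⟨k', q⟩ | ⟨k', l', q⟩ | ⟨k', l', q⟩ | ⟨k', q⟩ <;>
      simp [gA, Finsupp.single_apply, ite_and, validC, degC] at hi ⊢ <;> omega
  · intro g i
    rcases l with _ | l <;> rcases i with ⟨k', q⟩ | ⟨k', q⟩ | ⟨k', l', q⟩ | ⟨k', l', q⟩ | ⟨k', q⟩ <;>
      simp [gA, actC, Finsupp.single_apply, ite_and]

lemma gB_mem {m n k l : ℕ} (h1 : l < k) (h2 : k ≤ m) (h3 : k + l = n + 1) : gB p k l ∈ InvC p m n := by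
  rw [mem_InvC]
  constructor
  · intro i hi
    rcases l with _ | l <;> rcases i with ⟨k', q⟩ | ⟨k', q⟩ | ⟨k', l', q⟩ | ⟨k', l', q⟩ | ⟨k', q⟩ <;>
      simp [gB, Finsupp.single_apply, ite_and, validC, degC] at hi ⊢ <;> omega
  · intro g i
    rcases l with _ | l <;> rcases i with ⟨k', q⟩ | ⟨k', q⟩ | ⟨k', l', q⟩ | ⟨k', l', q⟩ | ⟨k', q⟩ <;>
      simp [gB, actC, Finsupp.single_apply, ite_and]

lemma gC_mem {m n k : ℕ} (h1 : 1 ≤ k) (h2 : k ≤ m) (h3 : 2 * k = n + 1) : gC p k ∈ InvC p m n := by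
  rw [mem_InvC]
  constructor
  · intro i hi
    rcases i with ⟨k', q⟩ | ⟨k', q⟩ | ⟨k', l', q⟩ | ⟨k', l', q⟩ | ⟨k', q⟩ <;>
      simp [gC, Finsupp.single_apply, ite_and, validC, degC] at hi ⊢ <;> omega
  · intro g i
    rcases i with ⟨k', q⟩ | ⟨k', q⟩ | ⟨k', l', q⟩ | ⟨k', l', q⟩ | ⟨k', q⟩ <;>
      simp [gC, actC, Finsupp.single_apply, ite_and]

lemma gX_mem {m n k l : ℕ} (h1 : l < k) (h2 : k ≤ m) (h3 : k + l = n + 1) : gX p k l ∈ InvC p m n :=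
  Submodule.sub_mem _ (gA_mem h1 h2 h3) (gB_mem h1 h2 h3)

end

lemma rAB_van {m n : ℕ} {x : ChC p} (hx : x ∈ InvC p m n) (k l : ℕ)
    (h : ¬ (l < k ∧ k ≤ m ∧ k + l = n + 1)) : x (rA p k l) = 0 ∧ x (rB p k l) = 0 := by
  rw [mem_InvC] at hx
  constructor
  · by_contra h0
    have := hx.1 _ h0
    cases l <;> simp [rA, validC, degC] at this <;> omega
  · by_contra h0
    have := hx.1 _ h0
    cases l <;> simp [rB, validC, degC] at this <;> omega

lemma sF_van {m n : ℕ} {x : ChC p} (hx : x ∈ InvC p m n) (k l : ℕ)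
    (h : ¬ (l < k ∧ k ≤ m ∧ k + l = n + 1)) : sF p k l x = 0 := by
  obtain ⟨h1, h2⟩ := rAB_van hx k l h
  simp [sF, h1, h2]

lemma bF_van {m n : ℕ} {x : ChC p} (hx : x ∈ InvC p m n) (k l : ℕ)
    (h : ¬ (l < k ∧ k ≤ m ∧ k + l = n + 1)) : bF p k l x = 0 := by
  obtain ⟨h1, h2⟩ := rAB_van hx k l h
  simp [bF, h2]

lemma cF_van {m n : ℕ} {x : ChC p} (hx : x ∈ InvC p m n) (k : ℕ)
    (h : ¬ (1 ≤ k ∧ k ≤ m ∧ 2 * k = n + 1)) : cF p k x = 0 := by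
  rw [mem_InvC] at hx
  by_contra h0
  have := hx.1 (.c k 1) (by simpa [cF] using h0)
  simp [validC, degC] at this
  omega

lemma inv_zero {m n : ℕ} {x : ChC p} (hx : x ∈ InvC p m n)
    (hs : ∀ k l, l < k → k ≤ m → k + l = n + 1 → sF p k l x = 0)
    (hb : ∀ k l, l < k → k ≤ m → k + l = n + 1 → bF p k l x = 0)
    (hc : ∀ k, 1 ≤ k → k ≤ m → 2 * k = n + 1 → cF p k x = 0) : x = 0 := by
  have hs' : ∀ k l, sF p k l x = 0 := fun k l => by
    by_cases h : l < k ∧ k ≤ m ∧ k + l = n + 1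
    · exact hs k l h.1 h.2.1 h.2.2
    · exact sF_van hx k l h
  have hb' : ∀ k l, bF p k l x = 0 := fun k l => by
    by_cases h : l < k ∧ k ≤ m ∧ k + l = n + 1
    · exact hb k l h.1 h.2.1 h.2.2
    · exact bF_van hx k l h
  have hc' : ∀ k, cF p k x = 0 := fun k => by
    by_cases h : 1 ≤ k ∧ k ≤ m ∧ 2 * k = n + 1
    · exact hc k h.1 h.2.1 h.2.2
    · exact cF_van hx k h
  have hB : ∀ k l, x (rB p k l) = 0 := fun k l => by simpa [bF] using hb' k l
  have hA : ∀ k l, x (rA p k l) = 0 := fun k l => by simpa [sF, hB] using hs' k l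
  have hC : ∀ k, x (.c k 1) = 0 := fun k => by simpa [cF] using hc' k
  rw [mem_InvC] at hx
  obtain ⟨hv, hi⟩ := hx
  ext i
  rw [Finsupp.zero_apply]
  by_contra h0
  have hvi := hv i h0
  rcases i with ⟨k', q⟩ | ⟨k', q⟩ | ⟨k', l', q⟩ | ⟨k', l', q⟩ | ⟨k', q⟩
  · obtain ⟨g, rfl⟩ := QuotientGroup.mk_surjective q
    apply h0
    rw [← hA k' 0, ← hi g (rA p k' 0)]
    simp [rA, actC]
  · obtain ⟨g, rfl⟩ := QuotientGroup.mk_surjective q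
    apply h0
    rw [← hB k' 0, ← hi g (rB p k' 0)]
    simp [rB, actC]
  · rcases l' with _ | l
    · simp [validC] at hvi
    · apply h0
      rw [← hA k' (l + 1), ← hi q (rA p k' (l + 1))]
      simp [rA, actC]
  · rcases l' with _ | l
    · simp [validC] at hvi
    · apply h0
      rw [← hB k' (l + 1), ← hi q (rB p k' (l + 1))]
      simp [rB, actC]
  · apply h0
    rw [← hC k', ← hi q (.c k' 1)]
    simp [actC]

lemma inv_ext {m n : ℕ} {x y : ChC p} (hx : x ∈ InvC p m n) (hy : y ∈ InvC p m n)
    (hs : ∀ k l, l < k → k ≤ m → k + l = n + 1 → sF p k l x = sF p k l y)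
    (hb : ∀ k l, l < k → k ≤ m → k + l = n + 1 → bF p k l x = bF p k l y)
    (hc : ∀ k, 1 ≤ k → k ≤ m → 2 * k = n + 1 → cF p k x = cF p k y) : x = y := by
  rw [← sub_eq_zero]
  apply inv_zero (Submodule.sub_mem _ hx hy)
  · intro k l h1 h2 h3; rw [map_sub, hs k l h1 h2 h3, sub_self]
  · intro k l h1 h2 h3; rw [map_sub, hb k l h1 h2 h3, sub_self]
  · intro k h1 h2 h3; rw [map_sub, hc k h1 h2 h3, sub_self]

lemma exists_inv (m n : ℕ) (S : Submodule ℤ (ChC p))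
    (hA : ∀ k l, l < k → k ≤ m → k + l = n + 1 → gA p k l ∈ S)
    (hX : ∀ k l, l < k → k ≤ m → k + l = n + 1 → gX p k l ∈ S)
    (hC : ∀ k, 1 ≤ k → k ≤ m → 2 * k = n + 1 → gC p k ∈ S)
    (s b : ℕ → ℕ → ℤ) (c : ℕ → ℤ) :
    ∃ x ∈ S,
      (∀ k l, l < k → k ≤ m → k + l = n + 1 → sF p k l x = s k l) ∧
      (∀ k l, l < k → k ≤ m → k + l = n + 1 → bF p k l x = b k l) ∧
      (∀ k, 1 ≤ k → k ≤ m → 2 * k = n + 1 → cF p k x = c k) := by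
  classical
  let T : Finset (ℕ × ℕ) := (Finset.range (m + 1) ×ˢ Finset.range (m + 1)).filter
    (fun q => q.2 < q.1 ∧ q.1 ≤ m ∧ q.1 + q.2 = n + 1)
  let U : Finset ℕ := (Finset.range (m + 1)).filter (fun k => 1 ≤ k ∧ k ≤ m ∧ 2 * k = n + 1)
  have hT : ∀ k l, l < k → k ≤ m → k + l = n + 1 → (k, l) ∈ T := by
    intro k l h1 h2 h3
    simp [T]; omega
  refine ⟨∑ q ∈ T, (s q.1 q.2 • gA p q.1 q.2 + b q.1 q.2 • gX p q.1 q.2) + ∑ k ∈ U, c k • gC p k,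
    ?_, ?_, ?_, ?_⟩
  · refine Submodule.add_mem _ (Submodule.sum_mem _ fun q hq => ?_) (Submodule.sum_mem _ fun k hk => ?_)
    · have h := (Finset.mem_filter.mp hq).2
      exact Submodule.add_mem _ (Submodule.smul_mem _ _ (hA _ _ h.1 h.2.1 h.2.2))
        (Submodule.smul_mem _ _ (hX _ _ h.1 h.2.1 h.2.2))
    · have h := (Finset.mem_filter.mp hk).2
      exact Submodule.smul_mem _ _ (hC _ h.1 h.2.1 h.2.2)
  · intro k l h1 h2 h3
    simp only [map_add, map_sum, map_smul, sF_gA, sF_gX, sF_gC, smul_zero, Finset.sum_const_zero,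
      add_zero]
    rw [Finset.sum_eq_single_of_mem (k, l) (hT k l h1 h2 h3)]
    · simp
    · rintro ⟨k', l'⟩ _ hne
      rw [if_neg, smul_zero]
      rintro ⟨rfl, rfl⟩; exact hne rfl
  · intro k l h1 h2 h3
    simp only [map_add, map_sum, map_smul, bF_gA, bF_gX, bF_gC, smul_zero, Finset.sum_const_zero,
      add_zero, zero_add]
    rw [Finset.sum_eq_single_of_mem (k, l) (hT k l h1 h2 h3)]
    · simp
    · rintro ⟨k', l'⟩ _ hne
      rw [if_neg, smul_zero]
      rintro ⟨rfl, rfl⟩; exact hne rfl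
  · intro k h1 h2 h3
    simp only [map_add, map_sum, map_smul, cF_gA, cF_gX, cF_gC, smul_zero, Finset.sum_const_zero,
      add_zero, zero_add]
    rw [Finset.sum_eq_single_of_mem k (by simp [U]; omega)]
    · simp
    · rintro k' _ hne
      rw [if_neg (Ne.symm hne), smul_zero]

lemma inv_induction {m n : ℕ} (S : Submodule ℤ (ChC p))
    (hA : ∀ k l, l < k → k ≤ m → k + l = n + 1 → gA p k l ∈ S)
    (hX : ∀ k l, l < k → k ≤ m → k + l = n + 1 → gX p k l ∈ S)
    (hC : ∀ k, 1 ≤ k → k ≤ m → 2 * k = n + 1 → gC p k ∈ S) : InvC p m n ≤ S := by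
  intro x hx
  obtain ⟨z, hz, h1, h2, h3⟩ := exists_inv m n (S ⊓ InvC p m n)
    (fun k l a b c => ⟨hA k l a b c, gA_mem a b c⟩) (fun k l a b c => ⟨hX k l a b c, gX_mem a b c⟩)
    (fun k a b c => ⟨hC k a b c, gC_mem a b c⟩)
    (fun k l => sF p k l x) (fun k l => bF p k l x) (fun k => cF p k x)
  have : x = z := inv_ext hx hz.2 (fun k l a b c => (h1 k l a b c).symm)
    (fun k l a b c => (h2 k l a b c).symm) (fun k a b c => (h3 k a b c).symm)
  rw [this]; exact hz.1

lemma D_InvC0 {m : ℕ} {x : ChC p} (hx : x ∈ InvC p m 0) : DC p j x = 0 := by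
  have : InvC p m 0 ≤ LinearMap.ker (DC p j) := by
    apply inv_induction
    · intro k l h1 h2 h3
      obtain ⟨rfl, rfl⟩ : k = 1 ∧ l = 0 := by omega
      exact D_A10 j
    · intro k l h1 h2 h3
      obtain ⟨rfl, rfl⟩ : k = 1 ∧ l = 0 := by omega
      exact D_X0 j 0
    · intro k h1 h2 h3; omega
  exact this hx

/-- Case analysis for the boundary of `gA`. -/
lemma D_A_cases (hodd : Odd p) (P : ChC p → Prop) (k l : ℕ) (h : l < k)
    (h1 : k = 1 → l = 0 → P 0)
    (h2 : ∀ k', k = k' + 2 → l = 0 → P (gX p (k' + 1) 0))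
    (h3 : ∀ l', k = l' + 2 → l = l' + 1 →
      P (eps (l' + 2) (l' + 1) • gA p (l' + 2) l' - uu p (l' + 1) • gC p (l' + 1)))
    (h4 : ∀ l' d, k = l' + d + 3 → l = l' + 1 →
      P (gX p (l' + d + 2) (l' + 1) + eps (l' + d + 3) (l' + 1) • gA p (l' + d + 3) l')) :
    P (DC p j (gA p k l)) := by
  rcases l with _ | l
  · obtain ⟨k, rfl⟩ := Nat.exists_eq_add_of_lt h
    rcases k with _ | k
    · have := D_A10 (p := p) j
      simp only [zero_add]
      rw [this]; exact h1 rfl rfl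
    · have e : 0 + (k + 1) + 1 = k + 2 := by omega
      rw [e, D_A0]; exact h2 k e rfl
  · obtain ⟨d, rfl⟩ := Nat.exists_eq_add_of_lt h
    rcases d with _ | d
    · have e : l + 1 + 0 + 1 = l + 2 := by omega
      rw [e, D_Atop j hodd]; exact h3 l e rfl
    · have e : l + 1 + (d + 1) + 1 = l + d + 3 := by omega
      rw [e, D_Amid]; exact h4 l d e rfl

lemma D_X_cases (hodd : Odd p) (P : ChC p → Prop) (k l : ℕ) (h : l < k)
    (h1 : l = 0 → P 0)
    (h2 : ∀ l', l = l' + 1 → P (eps k (l' + 1) • gX p k l')) :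
    P (DC p j (gX p k l)) := by
  rcases l with _ | l
  · obtain ⟨k, rfl⟩ := Nat.exists_eq_add_of_lt h
    have := D_X0 (p := p) j k
    simp only [zero_add]
    rw [this]; exact h1 rfl
  · rw [D_X j hodd _ _ h]; exact h2 l rfl

lemma D_C_cases (P : ChC p → Prop) (k : ℕ) (h : 1 ≤ k)
    (h1 : ∀ k', k = k' + 1 → P ((if Odd (k' + 1) then (-2 : ℤ) else 0) • gX p (k' + 1) k')) :
    P (DC p j (gC p k)) := by
  obtain ⟨k', rfl⟩ := Nat.exists_eq_add_of_le' h
  rw [D_C]; exact h1 k' rfl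

lemma D_InvC (hodd : Odd p) {m n : ℕ} {x : ChC p} (hx : x ∈ InvC p m (n + 1)) :
    DC p j x ∈ InvC p m n := by
  have : InvC p m (n + 1) ≤ (InvC p m n).comap (DC p j) := by
    apply inv_induction
    · intro k l h1 h2 h3
      refine D_A_cases j hodd (fun y => y ∈ InvC p m n) k l h1 ?_ ?_ ?_ ?_
      · intro _ _; exact Submodule.zero_mem _
      · rintro k' rfl rfl
        exact gX_mem (by omega) (by omega) (by omega)
      · rintro l' rfl rfl
        exact Submodule.sub_mem _ (Submodule.smul_mem _ _ (gA_mem (by omega) (by omega) (by omega)))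
          (Submodule.smul_mem _ _ (gC_mem (by omega) (by omega) (by omega)))
      · rintro l' d rfl rfl
        exact Submodule.add_mem _ (gX_mem (by omega) (by omega) (by omega))
          (Submodule.smul_mem _ _ (gA_mem (by omega) (by omega) (by omega)))
    · intro k l h1 h2 h3
      refine D_X_cases j hodd (fun y => y ∈ InvC p m n) k l h1 ?_ ?_
      · intro _; exact Submodule.zero_mem _
      · rintro l' rfl
        exact Submodule.smul_mem _ _ (gX_mem (by omega) (by omega) (by omega))
    · intro k h1 h2 h3
      refine D_C_cases j (fun y => y ∈ InvC p m n) k h1 ?_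
      rintro k' rfl
      exact Submodule.smul_mem _ _ (gX_mem (by omega) (by omega) (by omega))
  exact this hx

lemma sF_D (hodd : Odd p) {m n : ℕ} {x : ChC p} (hx : x ∈ InvC p m n) (k l : ℕ) :
    sF p k l (DC p j x) = eps k (l + 1) * sF p k (l + 1) x := by
  have : InvC p m n ≤ LinearMap.eqLocus (sF p k l ∘ₗ DC p j) (eps k (l + 1) • sF p k (l + 1)) := by
    apply inv_induction
    · intro k₁ l₁ h1 h2 h3
      simp only [LinearMap.mem_eqLocus, LinearMap.comp_apply, LinearMap.smul_apply, sF_gA]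
      refine D_A_cases j hodd (fun y => sF p k l y = _) k₁ l₁ h1 ?_ ?_ ?_ ?_
      · rintro rfl rfl; simp
      · rintro k' rfl rfl; simp [sF_gX]
      · rintro l' rfl rfl
        simp only [map_sub, map_smul, sF_gA, sF_gC, smul_eq_mul, add_left_inj]
        split_ifs with h
        · rw [h.1, h.2]; simp
        · simp
      · rintro l' d rfl rfl
        simp only [map_add, map_smul, sF_gA, sF_gX, smul_eq_mul, add_left_inj]
        split_ifs with h
        · rw [h.1, h.2]; simp
        · simp
    · intro k₁ l₁ h1 h2 h3
      simp only [LinearMap.mem_eqLocus, LinearMap.comp_apply, LinearMap.smul_apply, sF_gX]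
      refine D_X_cases j hodd (fun y => sF p k l y = _) k₁ l₁ h1 ?_ ?_
      · rintro rfl; simp
      · rintro l' rfl; simp [sF_gX]
    · intro k₁ h1 h2 h3
      simp only [LinearMap.mem_eqLocus, LinearMap.comp_apply, LinearMap.smul_apply, sF_gC]
      refine D_C_cases j (fun y => sF p k l y = _) k₁ h1 ?_
      rintro k' rfl
      simp only [map_smul, sF_gX, smul_zero]
  exact this hx

lemma cF_D (hodd : Odd p) {m n : ℕ} {x : ChC p} (hx : x ∈ InvC p m n) (k : ℕ) (hk : 1 ≤ k) :
    cF p k (DC p j x) = - uu p k * sF p (k + 1) k x := by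
  have : InvC p m n ≤ LinearMap.eqLocus (cF p k ∘ₗ DC p j) ((- uu p k) • sF p (k + 1) k) := by
    apply inv_induction
    · intro k₁ l₁ h1 h2 h3
      simp only [LinearMap.mem_eqLocus, LinearMap.comp_apply, LinearMap.smul_apply, sF_gA]
      refine D_A_cases j hodd (fun y => cF p k y = _) k₁ l₁ h1 ?_ ?_ ?_ ?_
      · rintro rfl rfl
        rw [if_neg (by omega)]; simp
      · rintro k' rfl rfl
        rw [if_neg (by omega)]; simp [cF_gX]
      · rintro l' rfl rfl
        simp only [map_sub, map_smul, cF_gA, cF_gC, smul_eq_mul]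
        by_cases h : k = l' + 1
        · subst h; simp
        · rw [if_neg h, if_neg (by omega)]; simp
      · rintro l' d rfl rfl
        rw [if_neg (by omega)]; simp [cF_gA, cF_gX]
    · intro k₁ l₁ h1 h2 h3
      simp only [LinearMap.mem_eqLocus, LinearMap.comp_apply, LinearMap.smul_apply, sF_gX]
      refine D_X_cases j hodd (fun y => cF p k y = _) k₁ l₁ h1 ?_ ?_
      · rintro rfl; simp
      · rintro l' rfl; simp [cF_gX]
    · intro k₁ h1 h2 h3
      simp only [LinearMap.mem_eqLocus, LinearMap.comp_apply, LinearMap.smul_apply, sF_gC]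
      refine D_C_cases j (fun y => cF p k y = _) k₁ h1 ?_
      rintro k' rfl
      simp only [map_smul, cF_gX, smul_zero]
  exact this hx

lemma bF_D (hodd : Odd p) {m n : ℕ} {x : ChC p} (hx : x ∈ InvC p m n) (k l : ℕ) (hl : l < k) :
    bF p k l (DC p j x) = sF p (k + 1) l x + eps k (l + 1) * bF p k (l + 1) x
      + (if k = l + 1 ∧ Odd k then -2 else 0) * cF p k x := by
  have : InvC p m n ≤ LinearMap.eqLocus (bF p k l ∘ₗ DC p j)
      (sF p (k + 1) l + eps k (l + 1) • bF p k (l + 1)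
        + (if k = l + 1 ∧ Odd k then (-2 : ℤ) else 0) • cF p k) := by
    apply inv_induction
    · intro k₁ l₁ h1 h2 h3
      simp only [LinearMap.mem_eqLocus, LinearMap.comp_apply, LinearMap.add_apply,
        LinearMap.smul_apply, sF_gA, bF_gA, cF_gA, smul_zero, add_zero]
      refine D_A_cases j hodd (fun y => bF p k l y = _) k₁ l₁ h1 ?_ ?_ ?_ ?_
      · rintro rfl rfl
        rw [if_neg (by omega)]; simp
      · rintro k' rfl rfl
        simp [bF_gX]
      · rintro l' rfl rfl
        rw [if_neg (by omega)]; simp [bF_gA, bF_gC]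
      · rintro l' d rfl rfl
        simp only [map_add, map_smul, bF_gA, bF_gX, smul_zero, add_zero]
        congr 1
        simp only [eq_iff_iff]; omega
    · intro k₁ l₁ h1 h2 h3
      simp only [LinearMap.mem_eqLocus, LinearMap.comp_apply, LinearMap.add_apply,
        LinearMap.smul_apply, sF_gX, bF_gX, cF_gX, smul_zero, add_zero, zero_add]
      refine D_X_cases j hodd (fun y => bF p k l y = _) k₁ l₁ h1 ?_ ?_
      · rintro rfl; simp
      · rintro l' rfl
        simp only [map_smul, bF_gX, smul_eq_mul, add_left_inj]
        split_ifs with h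
        · rw [h.1, h.2]
        · simp
    · intro k₁ h1 h2 h3
      simp only [LinearMap.mem_eqLocus, LinearMap.comp_apply, LinearMap.add_apply,
        LinearMap.smul_apply, sF_gC, bF_gC, cF_gC, smul_zero, add_zero, zero_add]
      refine D_C_cases j (fun y => bF p k l y = _) k₁ h1 ?_
      rintro k' rfl
      simp only [map_smul, bF_gX, smul_eq_mul]
      by_cases h : k = k' + 1
      · subst h
        by_cases h' : l = k'
        · subst h'; simp
        · have hne : ¬ (k' + 1 = l + 1 ∧ Odd (k' + 1)) := fun hh => h' (by omega)
          simp [h', hne, show ¬ (k' = l) by omega]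
      · simp [h]
  exact this hx


lemma eps_succ (k l : ℕ) : eps (k + 1) l = - eps k l := by
  unfold eps
  split_ifs
  · ring
  · simp

lemma exists_boundary (hodd : Odd p) {m n : ℕ} (hm : 1 ≤ m) {x : ChC p} (hx : x ∈ InvC p m n)
    (hD : DC p j x = 0)
    (H1 : n = 0 → sF p 1 0 x = 0)
    (H2 : n < 2 * m - 1 → n % 4 = 3 → (p : ℤ) ∣ cF p ((n + 1) / 2) x)
    (H3 : n = 2 * m - 1 → Even m → cF p m x = 0)
    (H4 : m - 1 ≤ n → n < 2 * m - 1 → n % 2 = (m - 1) % 2 → (2 : ℤ) ∣ bF p m (n + 1 - m) x) :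
    ∃ z ∈ InvC p m (n + 1), DC p j z = x := by
  have hp0 : (p : ℤ) ≠ 0 := by exact_mod_cast NeZero.ne p
  have hu0 : ∀ k, uu p k ≠ 0 := by
    intro k; unfold uu; split_ifs
    · exact one_ne_zero
    · exact hp0
  have Eb := fun k l (h : l < k) => (bF_D j hodd hx k l h).symm
  have Ec := fun k (h : 1 ≤ k) => (cF_D j hodd hx k h).symm
  simp only [hD, map_zero] at Eb Ec
  obtain ⟨z, hz, hzs, hzb, hzc⟩ := exists_inv (p := p) m (n + 1) (InvC p m (n + 1))
    (fun k l a b c => gA_mem a b c) (fun k l a b c => gX_mem a b c) (fun k a b c => gC_mem a b c)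
    (fun k l => if l + 2 ≤ k then bF p (k - 1) l x else -(cF p (k - 1) x / uu p (k - 1)))
    (fun k l => if k = m ∧ Odd l then (-1) ^ (m + 1) * (bF p m (l - 1) x / 2) else 0)
    (fun k => if k = m then -(bF p m (m - 1) x / 2) else 0)
  refine ⟨z, hz, inv_ext (D_InvC j hodd hz) hx ?_ ?_ ?_⟩
  · intro k l h1 h2 h3
    rw [sF_D j hodd hz]
    obtain ⟨k', rfl⟩ : ∃ k', k = k' + 1 := ⟨k - 1, by omega⟩
    by_cases hlk : l = k'
    · subst hlk
      rw [sF_van hz _ _ (by omega), mul_zero]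
      by_cases hl : l = 0
      · subst hl
        exact (H1 (by omega)).symm
      · have := Ec l (by omega)
        rcases mul_eq_zero.mp this with h | h
        · exact absurd (neg_eq_zero.mp h) (hu0 l)
        · exact h.symm
    · rw [hzs (k' + 1) (l + 1) (by omega) (by omega) (by omega), eps_succ]
      have e := Eb k' l (by omega)
      simp only [Nat.add_sub_cancel]
      by_cases hlk2 : k' = l + 1
      · subst hlk2
        rw [if_neg (by omega)]
        rw [bF_van hx (l + 1) (l + 1) (by omega)] at e
        by_cases ho : Odd (l + 1)
        · have hev : Even (l + 1 + 1) := by simp [parity_simps] at ho ⊢; exact ho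
          simp only [uu, eps, ho, hev.neg_one_pow, if_true, and_self, Int.ediv_one] at e ⊢
          linarith
        · simp only [eps, ho, if_false, and_false] at e ⊢
          linarith
      · rw [if_pos (by omega)]
        rw [if_neg (by omega)] at e
        linarith
  · intro k l h1 h2 h3
    rw [bF_D j hodd hz k l h1]
    by_cases hk : k = m
    · subst hk
      rw [sF_van hz _ _ (by omega)]
      by_cases ho : Odd (l + 1)
      · have hle : l % 2 = 0 := by
          have := Nat.odd_iff.mp ho; omega
        have hdv : (2 : ℤ) ∣ bF p k l x := by
          have := H4 (by omega) (by omega) (by omega)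
          rwa [show n + 1 - k = l by omega] at this
        obtain ⟨t, ht⟩ := hdv
        by_cases hl : l + 1 = k
        · rw [bF_van hz _ _ (by omega), hzc k (by omega) (by omega) (by omega)]
          rw [if_pos ⟨hl.symm, hl ▸ ho⟩, if_pos rfl, show k - 1 = l by omega, ht]
          rw [Int.mul_ediv_cancel_left _ (by norm_num)]
          ring
        · rw [hzb k (l + 1) (by omega) (by omega) (by omega), if_pos ⟨rfl, ho⟩,
            if_neg (by omega)]
          simp only [Nat.add_sub_cancel, eps, ho, if_true]
          rw [ht, Int.mul_ediv_cancel_left _ (by norm_num)]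
          have : ((-1 : ℤ) ^ (k + 1)) * (-1) ^ (k + 1) = 1 := by
            rw [← mul_pow]; norm_num
          linear_combination (2 * t) * this
      · have hlo : l % 2 = 1 := by
          have := Nat.not_odd_iff.mp ho; omega
        obtain ⟨l', rfl⟩ : ∃ l', l = l' + 1 := ⟨l - 1, by omega⟩
        have e := Eb k l' (by omega)
        have hol : Odd (l' + 1) := Nat.odd_iff.mpr hlo
        rw [sF_van hx _ _ (by omega), if_neg (by omega)] at e
        have hb0 : bF p k (l' + 1) x = 0 := by
          simp only [eps, hol, if_true, zero_add, zero_mul, add_zero] at e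
          rcases mul_eq_zero.mp e with h | h
          · exfalso
            rcases neg_one_pow_eq_or ℤ (k + 1) with h' | h' <;> rw [h'] at h <;> norm_num at h
          · exact h
        rw [hb0]
        have : ¬ (k = l' + 1 + 1 ∧ Odd k) := by
          rintro ⟨rfl, h⟩; exact ho h
        rw [if_neg this]
        simp [eps, ho]
    · rw [hzs (k + 1) l (by omega) (by omega) (by omega), if_pos (by omega)]
      have hb0 : bF p k (l + 1) z = 0 := by
        by_cases h : l + 1 < k
        · rw [hzb k (l + 1) h h2 (by omega), if_neg (fun hh => hk hh.1)]
        · exact bF_van hz _ _ (by omega)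
      have hc0 : cF p k z = 0 := by
        by_cases h : 2 * k = n + 1 + 1
        · rw [hzc k (by omega) h2 h, if_neg hk]
        · exact cF_van hz _ (by omega)
      rw [hb0, hc0]
      simp
  · intro k h1 h2 h3
    rw [cF_D j hodd hz k h1]
    by_cases hk : k = m
    · subst hk
      rw [sF_van hz _ _ (by omega), mul_zero]
      by_cases he : Even k
      · exact (H3 (by omega) he).symm
      · have ho : Odd k := by simpa using he
        have e := Eb k (k - 1) (by omega)
        rw [sF_van hx _ _ (by omega), bF_van hx _ _ (by omega), if_pos ⟨by omega, ho⟩] at e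
        linarith
    · rw [hzs (k + 1) k (by omega) (by omega) (by omega), if_neg (by omega)]
      simp only [Nat.add_sub_cancel]
      have hdv : uu p k ∣ cF p k x := by
        unfold uu
        split_ifs with ho
        · exact one_dvd _
        · have := Nat.not_odd_iff.mp ho
          have h := H2 (by omega) (by omega)
          rwa [show (n + 1) / 2 = k by omega] at h
      obtain ⟨t, ht⟩ := hdv
      rw [ht, Int.mul_ediv_cancel_left _ (hu0 k)]
      ring

lemma boundary_vals (hodd : Odd p) {m n : ℕ} (hm : 1 ≤ m) {z : ChC p} (hz : z ∈ InvC p m (n + 1)) :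
    sF p 1 0 (DC p j z) = 0 ∧
    (n % 4 = 3 → (p : ℤ) ∣ cF p ((n + 1) / 2) (DC p j z)) ∧
    cF p m (DC p j z) = 0 ∧
    (m - 1 ≤ n → n < 2 * m - 1 → (2 : ℤ) ∣ bF p m (n + 1 - m) (DC p j z)) := by
  refine ⟨?_, ?_, ?_, ?_⟩
  · rw [sF_D j hodd hz, sF_van hz _ _ (by omega), mul_zero]
  · intro h
    rw [cF_D j hodd hz _ (by omega)]
    have : ¬ Odd ((n + 1) / 2) := by rw [Nat.not_odd_iff]; omega
    rw [uu, if_neg this]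
    exact Dvd.dvd.mul_right (dvd_neg.mpr (dvd_refl _)) _
  · rw [cF_D j hodd hz _ hm, sF_van hz _ _ (by omega), mul_zero]
  · intro h1 h2
    rw [bF_D j hodd hz _ _ (by omega), sF_van hz _ _ (by omega), zero_add]
    apply dvd_add
    · apply Dvd.dvd.mul_right
      unfold eps
      split_ifs
      · exact dvd_mul_right _ _
      · exact dvd_zero _
    · apply Dvd.dvd.mul_right
      split_ifs
      · norm_num
      · exact dvd_zero _

lemma quot_equiv {M N : Type*} [AddCommGroup M] [AddCommGroup N] (Z B : Submodule ℤ M)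
    (φ : M →ₗ[ℤ] N) (hs : ∀ t, ∃ x ∈ Z, φ x = t) (hk : ∀ x ∈ Z, φ x = 0 ↔ x ∈ B) :
    Nonempty ((↥Z ⧸ Submodule.comap Z.subtype B) ≃ₗ[ℤ] N) := by
  have e : Submodule.comap Z.subtype B = LinearMap.ker (φ.domRestrict Z) := by
    ext ⟨x, hx⟩
    simp [hk x hx]
  refine ⟨(Submodule.quotEquivOfEq _ _ e).trans (LinearMap.quotKerEquivOfSurjective _ ?_)⟩
  intro t
  obtain ⟨x, hx, h⟩ := hs t
  exact ⟨⟨x, hx⟩, h⟩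

def castL (N : ℕ) : ℤ →ₗ[ℤ] ZMod N := (Int.castAddHom (ZMod N)).toIntLinearMap

lemma castL_apply (N : ℕ) (a : ℤ) : castL N a = (a : ZMod N) := rfl

def phi (p m n N1 N2 N3 : ℕ) : ChC p →ₗ[ℤ] ZMod N1 × ZMod N2 × ZMod N3 :=
  (castL N1 ∘ₗ sF p 1 0).prod ((castL N2 ∘ₗ cF p ((n + 1) / 2)).prod
    (castL N3 ∘ₗ (if n = 2 * m - 1 then cF p m else bF p m (n + 1 - m))))

lemma phi_apply (m n N1 N2 N3 : ℕ) (x : ChC p) : phi p m n N1 N2 N3 x =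
    (((sF p 1 0 x : ℤ) : ZMod N1), ((cF p ((n + 1) / 2) x : ℤ) : ZMod N2),
      (((if n = 2 * m - 1 then cF p m x else bF p m (n + 1 - m) x : ℤ)) : ZMod N3)) := by
  unfold phi
  split_ifs <;> rfl

lemma main_aux (hodd : Odd p) (m : ℕ) (hm : 1 ≤ m) (n N1 N2 N3 : ℕ)
    (hN1 : N1 = if n = 0 then 0 else 1)
    (hN2 : N2 = if 0 < n ∧ n < 2 * m - 1 ∧ n % 4 = 3 then p else 1)
    (hN3 : N3 = if n = 2 * m - 1 ∧ Even m then 0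
             else if m - 1 ≤ n ∧ n < 2 * m - 1 ∧ n % 2 = (m - 1) % 2 then 2
             else 1) :
    Nonempty (HinvC p m j n ≃ₗ[ℤ] (ZMod N1 × ZMod N2 × ZMod N3)) := by
  refine quot_equiv (ZinvC p m j n) (Submodule.map (DC p j) (InvC p m (n+1)))
    (phi p m n N1 N2 N3) ?_ ?_
  · have S1 : ∀ u : ℤ, ∃ x ∈ ZinvC p m j n, phi p m n N1 N2 N3 x = ((u : ZMod N1), 0, 0) := by
      intro u
      by_cases h : n = 0
      · subst h
        have hA : gA p 1 0 ∈ InvC p m 0 := gA_mem (by omega) (by omega) (by omega)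
        refine ⟨u • gA p 1 0, Submodule.smul_mem _ _ ⟨hA, D_InvC0 j hA⟩, ?_⟩
        rw [phi_apply, if_neg (by omega)]
        simp only [map_smul, sF_gA, cF_gA, bF_gA]
        simp
      · refine ⟨0, Submodule.zero_mem _, ?_⟩
        rw [if_neg h] at hN1
        subst hN1
        rw [map_zero]
        exact Prod.ext (Subsingleton.elim _ _) rfl
    have S2 : ∀ u : ℤ, ∃ x ∈ ZinvC p m j n, phi p m n N1 N2 N3 x = (0, (u : ZMod N2), 0) := by
      intro u
      by_cases h : 0 < n ∧ n < 2 * m - 1 ∧ n % 4 = 3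
      · have hA : gC p ((n + 1) / 2) ∈ InvC p m n := gC_mem (by omega) (by omega) (by omega)
        refine ⟨u • gC p ((n + 1) / 2), Submodule.smul_mem _ _ ⟨hA, ?_⟩, ?_⟩
        · refine D_C_cases j (fun y => y = 0) _ (by omega) ?_
          intro k' hk'
          have : ¬ Odd (k' + 1) := by rw [Nat.not_odd_iff]; omega
          rw [if_neg this, zero_smul]
        · rw [phi_apply, if_neg (by omega)]
          simp only [map_smul, sF_gC, cF_gC, bF_gC]
          simp
      · refine ⟨0, Submodule.zero_mem _, ?_⟩
        rw [if_neg h] at hN2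
        subst hN2
        rw [map_zero]
        exact Prod.ext rfl (Prod.ext (Subsingleton.elim _ _) rfl)
    have S3 : ∀ u : ℤ, ∃ x ∈ ZinvC p m j n, phi p m n N1 N2 N3 x = (0, 0, (u : ZMod N3)) := by
      intro u
      by_cases h : n = 2 * m - 1 ∧ Even m
      · have hA : gC p m ∈ InvC p m n := gC_mem (by omega) (by omega) (by omega)
        refine ⟨u • gC p m, Submodule.smul_mem _ _ ⟨hA, ?_⟩, ?_⟩
        · refine D_C_cases j (fun y => y = 0) _ (by omega) ?_
          rintro k' rfl
          have : ¬ Odd (k' + 1) := by simpa using h.2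
          rw [if_neg this, zero_smul]
        · rw [phi_apply, if_pos h.1]
          rw [if_neg (by omega)] at hN2
          subst hN2
          refine Prod.ext ?_ (Prod.ext (Subsingleton.elim _ _) ?_)
          · simp [map_smul, sF_gC]
          · simp [map_smul, cF_gC]
      · rw [if_neg h] at hN3
        by_cases h' : m - 1 ≤ n ∧ n < 2 * m - 1 ∧ n % 2 = (m - 1) % 2
        · have hA : gX p m (n + 1 - m) ∈ InvC p m n := gX_mem (by omega) (by omega) (by omega)
          refine ⟨u • gX p m (n + 1 - m), Submodule.smul_mem _ _ ⟨hA, ?_⟩, ?_⟩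
          · refine D_X_cases j hodd (fun y => y = 0) _ _ (by omega) (fun _ => rfl) ?_
            intro l' hl'
            have : ¬ Odd (l' + 1) := by rw [Nat.not_odd_iff]; omega
            rw [eps, if_neg this, zero_smul]
          · rw [phi_apply, if_neg (by omega)]
            simp only [map_smul, sF_gX, cF_gX, bF_gX]
            simp
        · refine ⟨0, Submodule.zero_mem _, ?_⟩
          rw [if_neg h'] at hN3
          subst hN3
          rw [map_zero]
          exact Prod.ext rfl (Prod.ext rfl (Subsingleton.elim _ _))
    rintro ⟨t1, t2, t3⟩
    obtain ⟨u1, rfl⟩ := ZMod.intCast_surjective t1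
    obtain ⟨u2, rfl⟩ := ZMod.intCast_surjective t2
    obtain ⟨u3, rfl⟩ := ZMod.intCast_surjective t3
    obtain ⟨x1, hx1, e1⟩ := S1 u1
    obtain ⟨x2, hx2, e2⟩ := S2 u2
    obtain ⟨x3, hx3, e3⟩ := S3 u3
    refine ⟨x1 + x2 + x3, Submodule.add_mem _ (Submodule.add_mem _ hx1 hx2) hx3, ?_⟩
    rw [map_add, map_add, e1, e2, e3]
    simp
  · intro x hx
    rw [phi_apply, Prod.mk_eq_zero, Prod.mk_eq_zero, ZMod.intCast_zmod_eq_zero_iff_dvd,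
      ZMod.intCast_zmod_eq_zero_iff_dvd, ZMod.intCast_zmod_eq_zero_iff_dvd, Submodule.mem_map]
    constructor
    · rintro ⟨h1, h2, h3⟩
      refine exists_boundary j hodd hm hx.1 hx.2 ?_ ?_ ?_ ?_
      · intro h
        rw [hN1, if_pos h] at h1
        simpa using h1
      · intro h h'
        rwa [hN2, if_pos ⟨by omega, h, h'⟩] at h2
      · intro h h'
        rw [hN3, if_pos ⟨h, h'⟩, if_pos h] at h3
        simpa using h3
      · intro h h' h''
        rw [hN3, if_neg (by omega), if_pos ⟨h, h', h''⟩, if_neg (by omega)] at h3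
        exact_mod_cast h3
    · rintro ⟨z, hz, rfl⟩
      obtain ⟨b1, b2, b3, b4⟩ := boundary_vals j hodd hm hz
      refine ⟨?_, ?_, ?_⟩
      · rw [b1]; exact dvd_zero _
      · rw [hN2]
        split_ifs with h
        · exact b2 h.2.2
        · simp
      · by_cases h : n = 2 * m - 1
        · rw [if_pos h, b3]; exact dvd_zero _
        · rw [if_neg h, hN3, if_neg (fun hh => h hh.1)]
          split_ifs with h'
          · exact_mod_cast b4 h'.1 h'.2.1
          · simp

end Aux

end DihedralCell

end

open DihedralCell in
/-- The homology of the complex of `D_{2p}`-invariants of the dihedral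
cellular complex satisfies `H_n ≅ A_n ⊕ P_n ⊕ Q_n`, where `A_n = ℤ` iff `n = 0`;
`P_n = ℤ/p` iff `0 < n < 2m-1` and `n ≡ 3 (mod 4)`; `Q_n = ℤ` iff `n = 2m-1` with `m`
even, and `Q_n = ℤ/2` iff `m-1 ≤ n < 2m-1` with `n ≡ m-1 (mod 2)`.
(`ZMod 0 = ℤ`, `ZMod 1 = 0`.) -/
theorem dihedral_cellular_invariant_homology
    (p : ℕ) (hp : p.Prime) (hodd : Odd p)
    (j : ℕ) (hj1 : 1 ≤ j) (hj2 : j ≤ p - 1)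
    (m : ℕ) (hm : 1 ≤ m) :
    ∀ n : ℕ, Nonempty (HinvC p m j n ≃ₗ[ℤ]
      (ZMod (if n = 0 then 0 else 1) ×
       ZMod (if 0 < n ∧ n < 2 * m - 1 ∧ n % 4 = 3 then p else 1) ×
       ZMod (if n = 2 * m - 1 ∧ Even m then 0
             else if m - 1 ≤ n ∧ n < 2 * m - 1 ∧ n % 2 = (m - 1) % 2 then 2
             else 1))) := by
  haveI : NeZero p := ⟨hp.ne_zero⟩
  intro n
  exact main_aux j hodd m hm n _ _ _ rfl rfl rfl
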